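/- arXiv:2408.09165 — 2 statements merged into one kernel-verified Lean document; each statement's English description precedes it below -/
import Mathlib

section
/- Let d ≥ 1 and let α = (α_1,…,α_d) be a multi-index with α_j > −1 for each j. There exists a constant C > 0, depending only on α and d, such that for every t > 0 and every x ∈ (0,∞)^d, the integral of |∂p_t^α(x,y)/∂t| over the region E_t(x) = { y ∈ (0,∞)^d : √(e^{−t} x_j y_j) ≤ 1 − e^{−t} for all j = 1,…,d } satisfies ∫_{E_t(x)} |∂p_t^α(x,y)/∂t| dy ≤ C/t. -/
open MeasureTheory Real Set

noncomputable def besselI (ν z : ℝ) : ℝ :=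
  ∑' m : ℕ, (z / 2) ^ (2 * (m : ℝ) + ν) / (Nat.factorial m * Real.Gamma ((m : ℝ) + ν + 1))

/-- The positive orthant `(0,∞)^d`. -/
def posOrthant (d : ℕ) : Set (Fin d → ℝ) := Set.univ.pi fun _ => Set.Ioi 0

/-- The Poisson–Laguerre kernel `p_t^α(x,y)`. -/
noncomputable def plKernel (d : ℕ) (α : Fin d → ℝ) (t : ℝ) (x y : Fin d → ℝ) : ℝ :=
  (1 / (2 * Real.sqrt π)) *
    ∫ r in Set.Ioo (0 : ℝ) 1,
      (t * Real.exp (t ^ 2 / (4 * Real.log r)) /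
          ((1 - r) ^ d * (-Real.log r) ^ ((3 : ℝ) / 2))) *
        (∏ j, (y j / x j) ^ (α j / 2) *
            Real.exp (-((r * x j + y j) / (1 - r)) - α j * Real.log r / 2) *
            besselI (α j) (2 * Real.sqrt (r * x j * y j) / (1 - r))) / r

/-- The Poisson–Laguerre semigroup `P_t^α f`, with the convention `P_0^α f = f`. -/
noncomputable def plP (d : ℕ) (α : Fin d → ℝ) (t : ℝ)
    (f : (Fin d → ℝ) → ℝ) (x : Fin d → ℝ) : ℝ :=
  if t = 0 then f x else ∫ y in posOrthant d, plKernel d α t x y * f y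

open scoped ENNReal

lemma bessel_monomial_identity {r x y q : ℝ} (a : ℝ) (hr : 0 < r) (hx : 0 < x) (hy : 0 < y)
    (hq : 0 < q) (m : ℕ) :
    (y / x) ^ (a / 2) * Real.exp (-(a * Real.log r / 2)) *
      ((2 * √(r * x * y) / q) / 2) ^ (2 * (m : ℝ) + a) =
    (r * x) ^ m * y ^ ((m : ℝ) + a) * q ^ (-(2 * (m : ℝ) + a)) := by
  obtain ⟨r, rfl⟩ : ∃ s, r = exp s := ⟨log r, (exp_log hr).symm⟩
  obtain ⟨x, rfl⟩ : ∃ s, x = exp s := ⟨log x, (exp_log hx).symm⟩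
  obtain ⟨y, rfl⟩ : ∃ s, y = exp s := ⟨log y, (exp_log hy).symm⟩
  obtain ⟨q, rfl⟩ : ∃ s, q = exp s := ⟨log q, (exp_log hq).symm⟩
  rw [show ∀ S Q : ℝ, 2 * S / Q / 2 = S / Q by intros; ring]
  simp only [← exp_add, ← exp_sub, ← exp_mul, ← exp_half, log_exp, ← exp_nat_mul]
  congr 1
  ring

lemma lintegral_pi_prod_eq_prod_lintegral {n : ℕ} {μ : Fin n → Measure ℝ}
    [∀ i, SigmaFinite (μ i)] {f : Fin n → ℝ → ℝ≥0∞} (hf : ∀ i, Measurable (f i)) :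
    ∫⁻ y, ∏ i, f i (y i) ∂Measure.pi μ = ∏ i, ∫⁻ s, f i s ∂μ i := by
  induction n with
  | zero => simp
  | succ n ih =>
    rw [← (measurePreserving_piFinSuccAbove μ 0).symm.lintegral_comp (by fun_prop)]
    simp only [MeasurableEquiv.piFinSuccAbove_symm_apply, Fin.insertNthEquiv_apply,
      Fin.prod_univ_succ, Fin.zero_succAbove, Fin.insertNth_zero',
      Fin.cons_zero, Fin.cons_succ]
    rw [lintegral_prod_mul (f := f 0) (g := fun z : Fin n → ℝ => ∏ i, f i.succ (z i))
      (hf 0).aemeasurable (Finset.measurable_fun_prod _ fun i _ =>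
        (hf i.succ).comp (measurable_pi_apply i)).aemeasurable, ih (fun i => hf i.succ)]

/-- Extended-nonnegative version of the one-dimensional Laguerre heat kernel (at `r = e^{-s}`). -/
noncomputable def laguerreHeat (a x r y : ℝ) : ℝ≥0∞ :=
  ENNReal.ofReal ((1 - r)⁻¹ * ((y / x) ^ (a / 2) *
    Real.exp (-((r * x + y) / (1 - r)) - a * Real.log r / 2))) *
  ∑' m : ℕ, ENNReal.ofReal ((2 * √(r * x * y) / (1 - r) / 2) ^ (2 * (m : ℝ) + a) /
    (Nat.factorial m * Real.Gamma ((m : ℝ) + a + 1)))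

lemma measurable_laguerreHeat (a x : ℝ) :
    Measurable fun p : ℝ × ℝ => laguerreHeat a x p.1 p.2 := by
  unfold laguerreHeat
  refine Measurable.mul (by fun_prop) (Measurable.tsum fun m => ?_)
  fun_prop

lemma toReal_laguerreHeat {a x r y : ℝ} (ha : -1 < a) (hx : 0 < x) (hr : r ∈ Ioo (0 : ℝ) 1)
    (hy : 0 < y) :
    (laguerreHeat a x r y).toReal = (1 - r)⁻¹ * ((y / x) ^ (a / 2) *
      Real.exp (-((r * x + y) / (1 - r)) - a * Real.log r / 2) *
      besselI a (2 * √(r * x * y) / (1 - r))) := by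
  have h1 : 0 < 1 - r := sub_pos.2 hr.2
  have hterm (m : ℕ) : 0 ≤ (2 * √(r * x * y) / (1 - r) / 2) ^ (2 * (m : ℝ) + a) /
      (Nat.factorial m * Real.Gamma ((m : ℝ) + a + 1)) := by
    have : 0 < Real.Gamma ((m : ℝ) + a + 1) := Real.Gamma_pos_of_pos (by
      have : (0 : ℝ) ≤ m := m.cast_nonneg
      linarith)
    positivity
  rw [laguerreHeat, ENNReal.toReal_mul, ENNReal.tsum_toReal_eq (fun _ => ENNReal.ofReal_ne_top),
    ENNReal.toReal_ofReal (by positivity), besselI]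
  simp_rw [ENNReal.toReal_ofReal (hterm _)]
  ring

lemma lintegral_rpow_mul_exp_neg_mul {b q : ℝ} (hb : -1 < b) (hq : 0 < q) :
    ∫⁻ y in Ioi (0 : ℝ), ENNReal.ofReal (y ^ b * Real.exp (-(q⁻¹ * y))) =
      ENNReal.ofReal (q ^ (b + 1) * Real.Gamma (b + 1)) := by
  have hint : IntegrableOn (fun y : ℝ => y ^ b * Real.exp (-(q⁻¹ * y))) (Ioi 0) := by
    simpa using integrableOn_rpow_mul_exp_neg_mul_rpow hb one_pos (inv_pos.2 hq)
  rw [← ofReal_integral_eq_lintegral_ofReal hint]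
  · have := Real.integral_rpow_mul_exp_neg_mul_Ioi (a := b + 1) (by linarith) (inv_pos.2 hq)
    simp only [add_sub_cancel_right, one_div, inv_inv] at this
    rw [this]
  · filter_upwards [ae_restrict_mem measurableSet_Ioi] with y hy
    have : (0 : ℝ) < y := hy
    simp only [Pi.zero_apply]
    positivity

lemma lintegral_laguerreHeat {a x r : ℝ} (ha : -1 < a) (hx : 0 < x) (hr : r ∈ Ioo (0 : ℝ) 1) :
    ∫⁻ y in Ioi (0 : ℝ), laguerreHeat a x r y = 1 := by
  obtain ⟨hr0, hr1⟩ := hr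
  have hq : 0 < 1 - r := sub_pos.2 hr1
  set q := 1 - r with hqdef
  have hb (m : ℕ) : -1 < (m : ℝ) + a := by
    have : (0 : ℝ) ≤ m := m.cast_nonneg
    linarith
  have hΓ (m : ℕ) : 0 < Real.Gamma ((m : ℝ) + a + 1) := Real.Gamma_pos_of_pos (by
    linarith [hb m])
  let c (m : ℕ) : ℝ := Real.exp (-(r * x / q)) * (r * x) ^ m * q ^ (-(2 * (m : ℝ) + a)) * q⁻¹ /
    (Nat.factorial m * Real.Gamma ((m : ℝ) + a + 1))
  have hc (m : ℕ) : 0 ≤ c m := by have := hΓ m; positivity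
  have hexpand : ∀ y ∈ Ioi (0 : ℝ), laguerreHeat a x r y =
      ∑' m : ℕ, ENNReal.ofReal (c m) *
        ENNReal.ofReal (y ^ ((m : ℝ) + a) * Real.exp (-(q⁻¹ * y))) := by
    intro y hy
    have hy : 0 < y := hy
    rw [laguerreHeat, ← ENNReal.tsum_mul_left]
    refine tsum_congr fun m => ?_
    rw [← ENNReal.ofReal_mul (by positivity), ← ENNReal.ofReal_mul (hc m)]
    congr 1
    have key := bessel_monomial_identity a hr0 hx hy hq m
    have hexp : Real.exp (-((r * x + y) / q) - a * Real.log r / 2) =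
        Real.exp (-(r * x / q)) * Real.exp (-(q⁻¹ * y)) * Real.exp (-(a * Real.log r / 2)) := by
      rw [← Real.exp_add, ← Real.exp_add]
      congr 1
      ring
    rw [← hqdef, hexp]
    calc _ = q⁻¹ * Real.exp (-(r * x / q)) * Real.exp (-(q⁻¹ * y)) *
          ((y / x) ^ (a / 2) * Real.exp (-(a * Real.log r / 2)) *
            ((2 * √(r * x * y) / q) / 2) ^ (2 * (m : ℝ) + a)) /
          (Nat.factorial m * Real.Gamma ((m : ℝ) + a + 1)) := by ring
      _ = _ := by rw [key]; ring
  rw [setLIntegral_congr_fun measurableSet_Ioi hexpand, lintegral_tsum (fun m => by fun_prop)]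
  have hterm (m : ℕ) : ∫⁻ y in Ioi (0 : ℝ), ENNReal.ofReal (c m) *
        ENNReal.ofReal (y ^ ((m : ℝ) + a) * Real.exp (-(q⁻¹ * y))) =
      ENNReal.ofReal (Real.exp (-(r * x / q)) * ((r * x / q) ^ m / Nat.factorial m)) := by
    rw [lintegral_const_mul _ (by fun_prop), lintegral_rpow_mul_exp_neg_mul (hb m) hq,
      ← ENNReal.ofReal_mul (hc m)]
    congr 1
    have hpow : q ^ (-(2 * (m : ℝ) + a)) * q ^ ((m : ℝ) + a + 1) * q⁻¹ = (q ^ m)⁻¹ := by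
      rw [← Real.rpow_natCast, ← Real.rpow_neg hq.le, ← Real.rpow_neg_one q, ← Real.rpow_add hq,
        ← Real.rpow_add hq]
      congr 1
      ring
    calc _ = Real.exp (-(r * x / q)) * (r * x) ^ m *
          (q ^ (-(2 * (m : ℝ) + a)) * q ^ ((m : ℝ) + a + 1) * q⁻¹) / Nat.factorial m *
          (Real.Gamma ((m : ℝ) + a + 1) / Real.Gamma ((m : ℝ) + a + 1)) := by
            simp only [c]; ring
      _ = _ := by rw [hpow, div_self (hΓ m).ne', div_pow]; ring
  simp_rw [hterm]
  have hsum : HasSum (fun m : ℕ => Real.exp (-(r * x / q)) * ((r * x / q) ^ m / Nat.factorial m))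
      1 := by
    have := (NormedSpace.expSeries_div_hasSum_exp (r * x / q)).mul_left (Real.exp (-(r * x / q)))
    rwa [← Real.exp_eq_exp_ℝ, ← Real.exp_add, neg_add_cancel, Real.exp_zero] at this
  rw [← ENNReal.ofReal_tsum_of_nonneg (fun m => by positivity) hsum.summable, hsum.tsum_eq,
    ENNReal.ofReal_one]

/-- Dominating function for the time derivative of the subordination density near time `t`. -/
noncomputable def subordBound (t r : ℝ) : ℝ :=
  (1 + 9 * t ^ 2 / (8 * -Real.log r)) * Real.exp (t ^ 2 / (16 * Real.log r)) /
    (-Real.log r) ^ ((3 : ℝ) / 2)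

lemma measurable_subordBound (t : ℝ) : Measurable (subordBound t) := by
  unfold subordBound
  fun_prop

lemma subordBound_nonneg (t : ℝ) {r : ℝ} (hr : r ∈ Ioo (0 : ℝ) 1) : 0 ≤ subordBound t r := by
  have : 0 < -Real.log r := neg_pos.2 (Real.log_neg hr.1 hr.2)
  unfold subordBound
  positivity

lemma lintegral_subordBound {t : ℝ} (ht : 0 < t) :
    ∫⁻ r in Ioo (0 : ℝ) 1, ENNReal.ofReal (subordBound t r / r) =
      ENNReal.ofReal (2 / t) *
        ∫⁻ w in Ioi (0 : ℝ), ENNReal.ofReal ((1 + 9 / 8 * w ^ 2) * Real.exp (-(1 / 16) * w ^ 2)) := by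
  let g : ℝ → ℝ := fun w => Real.exp (-(t ^ 2 * (w ^ 2)⁻¹))
  have himage : g '' Ioi 0 = Ioo 0 1 := by
    ext r
    constructor
    · rintro ⟨w, hw, rfl⟩
      have : 0 < w := hw
      refine ⟨Real.exp_pos _, Real.exp_lt_one_iff.2 (neg_lt_zero.2 (by positivity))⟩
    · rintro ⟨h0, h1⟩
      have hs : 0 < -Real.log r := neg_pos.2 (Real.log_neg h0 h1)
      refine ⟨t / √(-Real.log r), by simp only [mem_Ioi]; positivity, ?_⟩
      simp only [g]
      rw [div_pow, Real.sq_sqrt hs.le, inv_div, mul_div_cancel₀ _ (by positivity), neg_neg,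
        Real.exp_log h0]
  have hderiv : ∀ w ∈ Ioi (0 : ℝ),
      HasDerivWithinAt g (g w * (2 * t ^ 2 / w ^ 3)) (Ioi 0) w := by
    intro w hw
    have hw : 0 < w := hw
    have := (((hasDerivAt_pow 2 w).inv (by positivity)).const_mul (t ^ 2)).neg.exp
    refine (this.congr_deriv ?_).hasDerivWithinAt
    simp only [g, Pi.inv_apply]
    congr 1
    field_simp
    ring
  have hinj : InjOn g (Ioi 0) := by
    intro w hw v hv h
    have hw : 0 < w := hw
    have hv : 0 < v := hv
    have h := neg_injective (Real.exp_injective h)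
    have h := inv_injective (mul_left_cancel₀ (by positivity : t ^ 2 ≠ 0) h)
    exact (pow_left_inj₀ hw.le hv.le two_ne_zero).1 h
  rw [← himage, lintegral_image_eq_lintegral_abs_deriv_mul measurableSet_Ioi hderiv hinj,
    ← lintegral_const_mul _ (by fun_prop)]
  refine setLIntegral_congr_fun measurableSet_Ioi fun w hw => ?_
  have hw : 0 < w := hw
  have hg : 0 < g w := Real.exp_pos _
  rw [abs_of_pos (by positivity), ← ENNReal.ofReal_mul (by positivity),
    ← ENNReal.ofReal_mul (by positivity)]
  congr 1
  have hlog : Real.log (g w) = -(t ^ 2 * (w ^ 2)⁻¹) := Real.log_exp _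
  have hpow : (t ^ 2 * (w ^ 2)⁻¹) ^ ((3 : ℝ) / 2) = (t / w) ^ 3 := by
    rw [show t ^ 2 * (w ^ 2)⁻¹ = (t / w) ^ (2 : ℝ) by rw [Real.rpow_two, div_pow]; rfl,
      ← Real.rpow_mul (by positivity), ← Real.rpow_natCast]
    norm_num
  have he : t ^ 2 / (16 * -(t ^ 2 * (w ^ 2)⁻¹)) = -(1 / 16) * w ^ 2 := by
    field_simp
  rw [subordBound, hlog, neg_neg, hpow, he]
  field_simp

lemma lintegral_gaussian_moment_ne_top :
    ∫⁻ w in Ioi (0 : ℝ),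
      ENNReal.ofReal ((1 + 9 / 8 * w ^ 2) * Real.exp (-(1 / 16) * w ^ 2)) ≠ ∞ := by
  have h1 := integrable_exp_neg_mul_sq (b := 1 / 16) (by norm_num)
  have h2 := integrable_rpow_mul_exp_neg_mul_sq (b := 1 / 16) (by norm_num) (s := 2) (by norm_num)
  have h : Integrable fun w : ℝ => (1 + 9 / 8 * w ^ 2) * Real.exp (-(1 / 16) * w ^ 2) := by
    refine (h1.add (h2.const_mul (9 / 8))).congr (ae_of_all _ fun w => ?_)
    simp only [Pi.add_apply, Real.rpow_two]
    ring
  exact (h.integrableOn.lintegral_lt_top).ne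


lemma enorm_deriv_plKernel_le {d : ℕ} {α : Fin d → ℝ} (hα : ∀ j, -1 < α j) {t : ℝ} (ht : 0 < t)
    {x y : Fin d → ℝ} (hx : x ∈ posOrthant d) (hy : y ∈ posOrthant d) :
    ‖deriv (fun u => plKernel d α u x y) t‖ₑ ≤
      ∫⁻ r in Ioo (0 : ℝ) 1, ENNReal.ofReal (subordBound t r / r) *
        ∏ j, laguerreHeat (α j) (x j) r (y j) := by
  have hx (j) : 0 < x j := hx j (mem_univ j)
  have hy (j) : 0 < y j := hy j (mem_univ j)
  set H := ∫⁻ r in Ioo (0 : ℝ) 1, ENNReal.ofReal (subordBound t r / r) *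
        ∏ j, laguerreHeat (α j) (x j) r (y j)
  by_cases hfin : H = ∞
  · simp [hfin]
  let K (r : ℝ) : ℝ := (∏ j, laguerreHeat (α j) (x j) r (y j)).toReal / r
  have hKmeas : Measurable K := by
    refine (Measurable.ennreal_toReal (Finset.measurable_fun_prod _ fun j _ => ?_)).div
      measurable_id
    exact (measurable_laguerreHeat (α j) (x j)).comp (measurable_id.prodMk measurable_const)
  have hK0 : ∀ r ∈ Ioo (0 : ℝ) 1, 0 ≤ K r := fun r hr =>
    div_nonneg ENNReal.toReal_nonneg hr.1.le
  let φ (u r : ℝ) : ℝ := u * Real.exp (u ^ 2 / (4 * Real.log r)) / (-Real.log r) ^ ((3 : ℝ) / 2)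
  let φ' (u r : ℝ) : ℝ := (1 + u ^ 2 / (2 * Real.log r)) * Real.exp (u ^ 2 / (4 * Real.log r)) /
    (-Real.log r) ^ ((3 : ℝ) / 2)
  have hkernel (u : ℝ) : plKernel d α u x y =
      (1 / (2 * √π)) * ∫ r in Ioo (0 : ℝ) 1, φ u r * K r := by
    rw [plKernel]
    congr 1
    refine setIntegral_congr_fun measurableSet_Ioo fun r hr => ?_
    have h1 : 0 < 1 - r := sub_pos.2 hr.2
    simp only [φ, K, ENNReal.toReal_prod, toReal_laguerreHeat (hα _) (hx _) hr (hy _)]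
    rw [Finset.prod_mul_distrib (f := fun _ => (1 - r)⁻¹), Finset.prod_const, Finset.card_fin,
      inv_pow]
    ring
  have hbound : ∀ r ∈ Ioo (0 : ℝ) 1, ‖subordBound t r * K r‖ₑ ≤
      ENNReal.ofReal (subordBound t r / r) * ∏ j, laguerreHeat (α j) (x j) r (y j) := by
    intro r hr
    have hB := subordBound_nonneg t hr
    rw [Real.enorm_eq_ofReal (mul_nonneg hB (hK0 r hr)),
      show subordBound t r * K r = subordBound t r / r *
        (∏ j, laguerreHeat (α j) (x j) r (y j)).toReal by simp only [K]; ring,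
      ENNReal.ofReal_mul (div_nonneg hB hr.1.le)]
    exact mul_le_mul_right ENNReal.ofReal_toReal_le _
  have hboundint : IntegrableOn (fun r => subordBound t r * K r) (Ioo 0 1) :=
    ⟨((measurable_subordBound t).mul hKmeas).aestronglyMeasurable,
      (setLIntegral_mono' measurableSet_Ioo hbound).trans_lt (lt_top_iff_ne_top.2 hfin)⟩
  have hexple : ∀ r ∈ Ioo (0 : ℝ) 1, ∀ u : ℝ, t ^ 2 / 4 ≤ u ^ 2 →
      u ^ 2 / (4 * Real.log r) ≤ t ^ 2 / (16 * Real.log r) := by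
    intro r hr u hu
    have hl := Real.log_neg hr.1 hr.2
    have : u ^ 2 / (4 * Real.log r) - t ^ 2 / (16 * Real.log r) =
        (u ^ 2 - t ^ 2 / 4) / (4 * Real.log r) := by
      field_simp
      ring
    have : (u ^ 2 - t ^ 2 / 4) / (4 * Real.log r) ≤ 0 :=
      div_nonpos_of_nonneg_of_nonpos (by linarith) (by linarith)
    linarith
  have hφle : ∀ r ∈ Ioo (0 : ℝ) 1, |φ t r| ≤ t * subordBound t r := by
    intro r hr
    have hs : 0 < -Real.log r := neg_pos.2 (Real.log_neg hr.1 hr.2)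
    have hexp : t ^ 2 / (4 * Real.log r) ≤ t ^ 2 / (16 * Real.log r) :=
      hexple r hr t (by nlinarith)
    rw [abs_of_nonneg (by positivity)]
    simp only [φ, subordBound]
    rw [mul_div_assoc]
    gcongr
    refine (Real.exp_le_exp.2 hexp).trans (le_mul_of_one_le_left (Real.exp_pos _).le ?_)
    rw [le_add_iff_nonneg_right]
    positivity
  have hφ'le : ∀ r ∈ Ioo (0 : ℝ) 1, ∀ u ∈ Ioo (t / 2) (3 * t / 2),
      |φ' u r| ≤ subordBound t r := by
    intro r hr u hu
    have hs : 0 < -Real.log r := neg_pos.2 (Real.log_neg hr.1 hr.2)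
    obtain ⟨hu1, hu2⟩ := hu
    have hu0 : 0 < u := by linarith
    have hlow : t ^ 2 / 4 ≤ u ^ 2 := by nlinarith
    have hupp : u ^ 2 ≤ 9 * t ^ 2 / 4 := by nlinarith
    simp only [φ', subordBound]
    rw [abs_div, abs_mul, Real.abs_exp, abs_of_pos (Real.rpow_pos_of_pos hs _)]
    refine div_le_div_of_nonneg_right (mul_le_mul ?_ (Real.exp_le_exp.2 (hexple r hr u hlow))
      (Real.exp_pos _).le (by positivity)) (by positivity)
    refine (abs_add_le _ _).trans ?_
    rw [abs_one, abs_div, abs_mul, abs_of_neg (neg_pos.1 hs), abs_two, abs_of_nonneg (sq_nonneg u)]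
    refine add_le_add_right ?_ 1
    rw [div_le_div_iff₀ (by positivity) (by positivity)]
    nlinarith
  have hφderiv : ∀ r ∈ Ioo (0 : ℝ) 1, ∀ u, HasDerivAt (fun u => φ u r) (φ' u r) u := by
    intro r hr u
    have hs : Real.log r ≠ 0 := (Real.log_neg hr.1 hr.2).ne
    have := ((hasDerivAt_id u).mul
      (((hasDerivAt_pow 2 u).div_const (4 * Real.log r)).exp)).div_const
      ((-Real.log r) ^ ((3 : ℝ) / 2))
    refine this.congr_deriv ?_
    simp only [φ', id]
    congr 1
    field_simp
    ring
  have hφmeas (u : ℝ) : Measurable fun r => φ u r * K r := by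
    refine Measurable.mul ?_ hKmeas
    simp only [φ]
    fun_prop
  have hφ'meas : Measurable fun r => φ' t r * K r := by
    refine Measurable.mul ?_ hKmeas
    simp only [φ']
    fun_prop
  have hmem {P : ℝ → Prop} (h : ∀ r ∈ Ioo (0 : ℝ) 1, P r) :
      ∀ᵐ r ∂volume.restrict (Ioo (0 : ℝ) 1), P r := by
    filter_upwards [ae_restrict_mem measurableSet_Ioo] with r hr using h r hr
  have hφint : IntegrableOn (fun r => φ t r * K r) (Ioo 0 1) := by
    refine (hboundint.const_mul t).mono' (hφmeas t).aestronglyMeasurable (hmem fun r hr => ?_)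
    rw [norm_mul, Real.norm_eq_abs, Real.norm_of_nonneg (hK0 r hr), ← mul_assoc]
    exact mul_le_mul_of_nonneg_right (hφle r hr) (hK0 r hr)
  have hφ'K : ∀ r ∈ Ioo (0 : ℝ) 1, ∀ u ∈ Ioo (t / 2) (3 * t / 2),
      ‖φ' u r * K r‖ ≤ subordBound t r * K r := by
    intro r hr u hu
    rw [norm_mul, Real.norm_eq_abs, Real.norm_of_nonneg (hK0 r hr)]
    exact mul_le_mul_of_nonneg_right (hφ'le r hr u hu) (hK0 r hr)
  have htmem : t ∈ Ioo (t / 2) (3 * t / 2) := ⟨by linarith, by linarith⟩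
  obtain ⟨-, hder⟩ := hasDerivAt_integral_of_dominated_loc_of_deriv_le
    (μ := volume.restrict (Ioo (0 : ℝ) 1)) (F := fun u r => φ u r * K r)
    (F' := fun u r => φ' u r * K r) (isOpen_Ioo.mem_nhds htmem)
    (Filter.Eventually.of_forall fun u => (hφmeas u).aestronglyMeasurable) hφint
    hφ'meas.aestronglyMeasurable (hmem hφ'K) hboundint
    (hmem fun r hr u _ => (hφderiv r hr u).mul_const (K r))
  have hconst : ‖1 / (2 * √π)‖ₑ ≤ 1 := by
    have h1 : 1 ≤ √π := Real.one_le_sqrt.2 (by linarith [Real.pi_gt_three])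
    rw [Real.enorm_eq_ofReal (by positivity)]
    refine ENNReal.ofReal_le_one.2 ?_
    rw [div_le_one (by positivity)]
    linarith
  simp_rw [hkernel]
  rw [(hder.const_mul _).deriv, enorm_mul]
  calc _ ≤ 1 * ∫⁻ r in Ioo (0 : ℝ) 1, ‖φ' t r * K r‖ₑ :=
        mul_le_mul' hconst (enorm_integral_le_lintegral_enorm _)
    _ ≤ H := by
      rw [one_mul]
      refine setLIntegral_mono' measurableSet_Ioo fun r hr => le_trans ?_ (hbound r hr)
      rw [enorm_le_iff_norm_le]
      exact (hφ'K r hr t htmem).trans (le_abs_self _)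

lemma lintegral_prod_laguerreHeat {d : ℕ} {α : Fin d → ℝ} (hα : ∀ j, -1 < α j)
    {x : Fin d → ℝ} (hx : x ∈ posOrthant d) {r : ℝ} (hr : r ∈ Ioo (0 : ℝ) 1) :
    ∫⁻ y in posOrthant d, ∏ j, laguerreHeat (α j) (x j) r (y j) = 1 := by
  rw [posOrthant, volume_pi, Measure.restrict_pi_pi,
    lintegral_pi_prod_eq_prod_lintegral (f := fun j => laguerreHeat (α j) (x j) r) fun j =>
      (measurable_laguerreHeat (α j) (x j)).comp (measurable_const.prodMk measurable_id)]
  exact Finset.prod_eq_one fun j _ => lintegral_laguerreHeat (hα j) (hx j (mem_univ j)) hr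

lemma lintegral_enorm_deriv_plKernel_le {d : ℕ} {α : Fin d → ℝ} (hα : ∀ j, -1 < α j) {t : ℝ}
    (ht : 0 < t) {x : Fin d → ℝ} (hx : x ∈ posOrthant d) :
    ∫⁻ y in posOrthant d, ‖deriv (fun u => plKernel d α u x y) t‖ₑ ≤
      ENNReal.ofReal (2 / t) *
        ∫⁻ w in Ioi (0 : ℝ), ENNReal.ofReal ((1 + 9 / 8 * w ^ 2) * Real.exp (-(1 / 16) * w ^ 2)) := by
  have hmeas : Measurable (Function.uncurry fun (y : Fin d → ℝ) (r : ℝ) =>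
      ENNReal.ofReal (subordBound t r / r) * ∏ j, laguerreHeat (α j) (x j) r (y j)) := by
    refine Measurable.mul ?_ (Finset.measurable_fun_prod _ fun j _ => ?_)
    · exact (((measurable_subordBound t).div measurable_id).ennreal_ofReal).comp measurable_snd
    · exact (measurable_laguerreHeat (α j) (x j)).comp
        (measurable_snd.prodMk ((measurable_pi_apply j).comp measurable_fst))
  have hposmeas : MeasurableSet (posOrthant d) :=
    MeasurableSet.univ_pi fun _ => measurableSet_Ioi
  calc _ ≤ ∫⁻ y in posOrthant d, ∫⁻ r in Ioo (0 : ℝ) 1, ENNReal.ofReal (subordBound t r / r) *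
        ∏ j, laguerreHeat (α j) (x j) r (y j) :=
        setLIntegral_mono' hposmeas fun y hy => enorm_deriv_plKernel_le hα ht hx hy
    _ = ∫⁻ r in Ioo (0 : ℝ) 1, ENNReal.ofReal (subordBound t r / r) := by
      rw [lintegral_lintegral_swap hmeas.aemeasurable]
      refine setLIntegral_congr_fun measurableSet_Ioo fun r hr => ?_
      rw [lintegral_const_mul' _ _ ENNReal.ofReal_ne_top, lintegral_prod_laguerreHeat hα hx hr,
        mul_one]
    _ = _ := lintegral_subordBound ht

theorem laguerre_poisson_kernel_deriv_L1_small_region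
    (d : ℕ) (hd : 1 ≤ d) (α : Fin d → ℝ) (hα : ∀ j, -1 < α j) :
    ∃ C > 0, ∀ t > (0 : ℝ), ∀ x ∈ posOrthant d,
      (∫ y in {y : Fin d → ℝ | (∀ j, 0 < y j) ∧
          ∀ j, Real.sqrt (Real.exp (-t) * x j * y j) ≤ 1 - Real.exp (-t)},
        |deriv (fun u => plKernel d α u x y) t|) ≤ C / t := by
  set A : ℝ≥0∞ := ∫⁻ w in Ioi (0 : ℝ),
    ENNReal.ofReal ((1 + 9 / 8 * w ^ 2) * Real.exp (-(1 / 16) * w ^ 2))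
  refine ⟨2 * A.toReal + 1, by positivity, fun t ht x hx => ?_⟩
  have hC : ENNReal.ofReal (2 / t) * A = ENNReal.ofReal (2 / t * A.toReal) := by
    rw [ENNReal.ofReal_mul (by positivity), ENNReal.ofReal_toReal lintegral_gaussian_moment_ne_top]
  have hle : ‖∫ y in {y : Fin d → ℝ | (∀ j, 0 < y j) ∧
          ∀ j, Real.sqrt (Real.exp (-t) * x j * y j) ≤ 1 - Real.exp (-t)},
        |deriv (fun u => plKernel d α u x y) t|‖ₑ ≤ ENNReal.ofReal (2 / t * A.toReal) := by
    rw [← hC]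
    refine (enorm_integral_le_lintegral_enorm _).trans (le_trans ?_
      (lintegral_enorm_deriv_plKernel_le hα ht hx))
    simp only [enorm_abs]
    exact lintegral_mono_set fun y hy j _ => hy.1 j
  rw [← ofReal_norm, ENNReal.ofReal_le_ofReal_iff (by positivity)] at hle
  refine (le_abs_self _).trans (hle.trans ?_)
  rw [div_mul_eq_mul_div]
  gcongr
  linarith
end

section
/- Let d ≥ 1, let 0 ≤ k ≤ d be an integer, and let α = (α_1,…,α_d) be a multi-index with α_j > −1 for j = 1,…,k and α_j > −1/2 for j = k+1,…,d. There exists a constant C > 0, depending only on α, d and k, such that for every t > 0 and every x ∈ (0,∞)^d, the integral of |∂p_t^α(x,y)/∂t| over the mixed region G_t(x) = { y ∈ (0,∞)^d : √(e^{−t} x_j y_j) ≤ 1 − e^{−t} for j = 1,…,k and √(e^{−t} x_j y_j) > 1 − e^{−t} for j = k+1,…,d } satisfies ∫_{G_t(x)} |∂p_t^α(x,y)/∂t| dy ≤ C/t. -/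
open MeasureTheory Real Set

open scoped ENNReal

lemma besselI_term_nonneg {ν z : ℝ} (hν : -1 < ν) (hz : 0 ≤ z) (m : ℕ) :
    0 ≤ (z / 2) ^ (2 * (m : ℝ) + ν) / (Nat.factorial m * Real.Gamma ((m : ℝ) + ν + 1)) := by
  have hm : (0 : ℝ) ≤ m := m.cast_nonneg
  have : 0 < Real.Gamma ((m : ℝ) + ν + 1) := Real.Gamma_pos_of_pos (by linarith)
  have := Real.rpow_nonneg (by linarith : 0 ≤ z / 2) (2 * (m : ℝ) + ν)
  positivity

lemma besselI_nonneg {ν z : ℝ} (hν : -1 < ν) (hz : 0 ≤ z) : 0 ≤ besselI ν z :=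
  tsum_nonneg fun m => besselI_term_nonneg hν hz m

lemma ofReal_besselI_le {ν z : ℝ} (hν : -1 < ν) (hz : 0 ≤ z) :
    ENNReal.ofReal (besselI ν z) ≤ ∑' m : ℕ, ENNReal.ofReal
      ((z / 2) ^ (2 * (m : ℝ) + ν) / (Nat.factorial m * Real.Gamma ((m : ℝ) + ν + 1))) := by
  unfold besselI
  by_cases h : Summable fun m : ℕ =>
      (z / 2) ^ (2 * (m : ℝ) + ν) / (Nat.factorial m * Real.Gamma ((m : ℝ) + ν + 1))
  · exact (ENNReal.ofReal_tsum_of_nonneg (besselI_term_nonneg hν hz) h).le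
  · simp [tsum_eq_zero_of_not_summable h]

@[fun_prop]
lemma measurable_besselI (ν : ℝ) : Measurable (besselI ν) := by
  unfold besselI
  exact Measurable.tsum fun m => by fun_prop

lemma lintegral_rpow_mul_exp_neg_mul_Ioi {a b : ℝ} (ha : 0 < a) (hb : 0 < b) :
    ∫⁻ y in Ioi (0 : ℝ), ENNReal.ofReal (y ^ (a - 1) * Real.exp (-(b * y))) =
      ENNReal.ofReal ((1 / b) ^ a * Real.Gamma a) := by
  have h := Real.integral_rpow_mul_exp_neg_mul_Ioi ha hb
  have hG := Real.Gamma_pos_of_pos ha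
  rw [← h, ofReal_integral_eq_lintegral_ofReal]
  · exact Integrable.of_integral_ne_zero (by rw [h]; positivity)
  · filter_upwards [ae_restrict_mem measurableSet_Ioi] with y hy
    have : 0 < y := hy
    simp only [Pi.zero_apply]
    positivity

/-- The one-dimensional Laguerre heat factor, without its normalisation `(1 - r)⁻¹`. -/
noncomputable def laguerreFactor (a x r y : ℝ) : ℝ :=
  (y / x) ^ (a / 2) * Real.exp (-((r * x + y) / (1 - r)) - a * Real.log r / 2) *
    besselI a (2 * Real.sqrt (r * x * y) / (1 - r))

lemma laguerre_term_eq {a x r y : ℝ} (hx : 0 < x) (hr : r ∈ Ioo (0 : ℝ) 1)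
    (hy : 0 < y) (m : ℕ) (g : ℝ) :
    (y / x) ^ (a / 2) * Real.exp (-((r * x + y) / (1 - r)) - a * Real.log r / 2) *
      ((2 * Real.sqrt (r * x * y) / (1 - r) / 2) ^ (2 * (m : ℝ) + a) / (Nat.factorial m * g)) =
    (Real.exp (-(r * x / (1 - r))) * (r * x) ^ (m : ℝ) * (1 - r) ^ (-(2 * (m : ℝ) + a)) /
      (Nat.factorial m * g)) *
      (y ^ ((m : ℝ) + a + 1 - 1) * Real.exp (-(1 / (1 - r) * y))) := by
  obtain ⟨hr0, hr1⟩ := hr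
  have h1 : 0 < 1 - r := by linarith
  have e1 : 2 * Real.sqrt (r * x * y) / (1 - r) / 2 = (r * x * y) ^ (1 / 2 : ℝ) / (1 - r) := by
    rw [Real.sqrt_eq_rpow]; ring
  have key : (y / x) ^ (a / 2) * Real.exp (-((r * x + y) / (1 - r)) - a * Real.log r / 2) *
      ((r * x * y) ^ (1 / 2 : ℝ) / (1 - r)) ^ (2 * (m : ℝ) + a) =
      Real.exp (-(r * x / (1 - r))) * (r * x) ^ (m : ℝ) * (1 - r) ^ (-(2 * (m : ℝ) + a)) *
      (y ^ ((m : ℝ) + a + 1 - 1) * Real.exp (-(1 / (1 - r) * y))) := by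
    rw [Real.rpow_def_of_pos (by positivity : 0 < y / x),
      Real.rpow_def_of_pos (by positivity : 0 < (r * x * y) ^ (1 / 2 : ℝ) / (1 - r)),
      Real.rpow_def_of_pos (by positivity : 0 < r * x), Real.rpow_def_of_pos h1,
      Real.rpow_def_of_pos hy,
      Real.log_div hy.ne' hx.ne', Real.log_div (by positivity) h1.ne',
      Real.log_rpow (by positivity), Real.log_mul (by positivity) (by positivity),
      Real.log_mul hr0.ne' hx.ne']
    simp only [← Real.exp_add]
    congr 1
    ring
  rw [e1, ← mul_div_assoc, key]
  ring

lemma lintegral_laguerreFactor_le {a x r : ℝ} (ha : -1 < a) (hx : 0 < x)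
    (hr : r ∈ Ioo (0 : ℝ) 1) :
    ∫⁻ y in Ioi (0 : ℝ), ENNReal.ofReal (laguerreFactor a x r y) ≤ ENNReal.ofReal (1 - r) := by
  have h1 : 0 < 1 - r := by linarith [hr.2]
  have hr0 := hr.1
  have hG : ∀ m : ℕ, 0 < Real.Gamma ((m : ℝ) + a + 1) := fun m =>
    Real.Gamma_pos_of_pos (by have : (0 : ℝ) ≤ m := m.cast_nonneg; linarith)
  set c : ℕ → ℝ := fun m =>
    Real.exp (-(r * x / (1 - r))) * (r * x) ^ (m : ℝ) * (1 - r) ^ (-(2 * (m : ℝ) + a)) /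
      (Nat.factorial m * Real.Gamma ((m : ℝ) + a + 1)) with hc
  have hc0 : ∀ m, 0 ≤ c m := fun m => by have := hG m; simp only [hc]; positivity
  calc
    _ ≤ ∫⁻ y in Ioi (0 : ℝ), ∑' m : ℕ, ENNReal.ofReal (c m) *
          ENNReal.ofReal (y ^ ((m : ℝ) + a + 1 - 1) * Real.exp (-(1 / (1 - r) * y))) := by
        refine setLIntegral_mono' measurableSet_Ioi fun y hy => ?_
        have hy' : 0 < y := hy
        have hpre : 0 ≤ (y / x) ^ (a / 2) *
            Real.exp (-((r * x + y) / (1 - r)) - a * Real.log r / 2) := by positivity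
        rw [laguerreFactor, ENNReal.ofReal_mul hpre]
        refine (mul_le_mul_right (ofReal_besselI_le ha (by positivity)) _).trans ?_
        rw [← ENNReal.tsum_mul_left]
        refine ENNReal.tsum_le_tsum fun m => le_of_eq ?_
        rw [← ENNReal.ofReal_mul hpre, ← ENNReal.ofReal_mul (hc0 m),
          laguerre_term_eq hx hr hy']
    _ = ∑' m : ℕ, ENNReal.ofReal (c m) *
          ENNReal.ofReal ((1 / (1 / (1 - r))) ^ ((m : ℝ) + a + 1) *
            Real.Gamma ((m : ℝ) + a + 1)) := by
        rw [lintegral_tsum fun m => by fun_prop]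
        refine tsum_congr fun m => ?_
        rw [lintegral_const_mul _ (by fun_prop), lintegral_rpow_mul_exp_neg_mul_Ioi
          (by have : (0 : ℝ) ≤ m := m.cast_nonneg; linarith) (by positivity)]
    _ = ∑' m : ℕ, ENNReal.ofReal ((1 - r) * Real.exp (-(r * x / (1 - r))) *
          ((r * x / (1 - r)) ^ m / Nat.factorial m)) := by
        refine tsum_congr fun m => ?_
        rw [← ENNReal.ofReal_mul (hc0 m)]
        congr 1
        have := hG m
        have e : (1 - r) ^ ((m : ℝ) + a + 1) =
            (1 - r) / (1 - r) ^ m * (1 - r) ^ (2 * (m : ℝ) + a) := by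
          rw [← Real.rpow_natCast, div_mul_eq_mul_div,
            eq_div_iff (Real.rpow_pos_of_pos h1 _).ne', ← Real.rpow_add h1]
          nth_rw 2 [← Real.rpow_one (1 - r)]
          rw [← Real.rpow_add h1]
          congr 1
          ring
        have hp : 0 < (1 - r) ^ (2 * (m : ℝ) + a) := Real.rpow_pos_of_pos h1 _
        simp only [hc]
        rw [one_div_one_div, e, Real.rpow_neg h1.le, Real.rpow_natCast, div_pow]
        field_simp
    _ = ENNReal.ofReal (1 - r) := by
        have hs := (NormedSpace.expSeries_div_summable (𝔸 := ℝ) (r * x / (1 - r)))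
        rw [← ENNReal.ofReal_tsum_of_nonneg (fun m => by positivity) (hs.mul_left _),
          tsum_mul_left]
        have := congrFun (NormedSpace.exp_eq_tsum_div (𝔸 := ℝ)) (r * x / (1 - r))
        rw [← this, ← Real.exp_eq_exp_ℝ, mul_assoc, ← Real.exp_add]
        simp

lemma lintegral_pi_prod {n : ℕ} (μ : Fin n → Measure ℝ) [∀ i, SigmaFinite (μ i)]
    {f : Fin n → ℝ → ℝ≥0∞} (hf : ∀ i, Measurable (f i)) :
    ∫⁻ y, ∏ i, f i (y i) ∂(Measure.pi μ) = ∏ i, ∫⁻ y, f i y ∂(μ i) := by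
  induction n with
  | zero => simp
  | succ n ih =>
    rw [← (measurePreserving_piFinSuccAbove μ 0).symm.lintegral_comp
      (f := fun y => ∏ i, f i (y i))
      (Finset.measurable_prod _ fun i _ => (hf i).comp (measurable_pi_apply i))]
    simp only [MeasurableEquiv.piFinSuccAbove_symm_apply, Fin.insertNthEquiv,
      Fin.prod_univ_succ, Fin.insertNth_zero, Equiv.coe_fn_mk, Fin.cons_succ,
      Fin.zero_succAbove, Fin.cons_zero, cast_eq]
    rw [lintegral_prod_mul (g := fun y : Fin n → ℝ => ∏ i, f (Fin.succ i) (y i))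
      (hf 0).aemeasurable (Finset.measurable_prod _ fun i _ =>
        (hf (Fin.succ i)).comp (measurable_pi_apply i)).aemeasurable,
      ih _ fun i => hf (Fin.succ i)]

lemma lintegral_Ioo_inv_sqrt_neg_log_le {t : ℝ} (ht : 0 < t) :
    ∫⁻ r in Ioo (0 : ℝ) 1,
      ENNReal.ofReal (1 / (Real.sqrt (-Real.log r) * (-Real.log r + t ^ 2) * r)) ≤
    ENNReal.ofReal (π / t) := by
  set f : ℝ → ℝ := fun r => 2 / t * Real.arctan (Real.sqrt (-Real.log r) / t)
  set f' : ℝ → ℝ := fun r => -(1 / (Real.sqrt (-Real.log r) * (-Real.log r + t ^ 2) * r))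
  have hs : ∀ r ∈ Ioo (0 : ℝ) 1, 0 < -Real.log r := fun r hr => by
    linarith [Real.log_neg hr.1 hr.2]
  have hf' : ∀ r ∈ Ioo (0 : ℝ) 1, HasDerivWithinAt f (f' r) (Ioo 0 1) r := fun r hr => by
    have h := ((((Real.hasDerivAt_log hr.1.ne').neg.sqrt
      (hs r hr).ne').div_const t).arctan).const_mul (2 / t)
    refine (h.congr_deriv ?_).hasDerivWithinAt
    have hq := Real.sqrt_pos.2 (hs r hr)
    have hr0 := hr.1
    have hs0 := hs r hr
    have hsq := Real.sq_sqrt (hs r hr).le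
    simp only [f', Pi.neg_apply, div_pow, hsq]
    have : 0 < -Real.log r + t ^ 2 := by positivity
    have : t ^ 2 + -Real.log r ≠ 0 := by positivity
    field_simp
    ring
  have hinj : InjOn f (Ioo 0 1) := by
    intro r hr r' hr' h
    have h2 : Real.sqrt (-Real.log r) / t = Real.sqrt (-Real.log r') / t :=
      Real.arctan_injective (mul_left_cancel₀ (by positivity : 2 / t ≠ 0) h)
    have h3 := (div_left_inj' ht.ne').1 h2
    have h4 := (Real.sqrt_inj (hs r hr).le (hs r' hr').le).1 h3
    exact Real.log_injOn_pos hr.1 hr'.1 (neg_injective h4)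
  have h := lintegral_image_eq_lintegral_abs_deriv_mul measurableSet_Ioo hf' hinj (fun _ => 1)
  have himg : f '' Ioo 0 1 ⊆ Ioo 0 (π / t) := by
    rintro _ ⟨r, hr, rfl⟩
    have h1 : 0 < Real.sqrt (-Real.log r) / t := div_pos (Real.sqrt_pos.2 (hs r hr)) ht
    have h2 := Real.arctan_pos.2 h1
    refine ⟨by simp only [f]; positivity, ?_⟩
    have h3 := mul_lt_mul_of_pos_left (Real.arctan_lt_pi_div_two (Real.sqrt (-Real.log r) / t))
      (by positivity : 0 < 2 / t)
    calc f r < 2 / t * (π / 2) := h3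
      _ = π / t := by ring
  calc
    _ = ∫⁻ r in Ioo (0 : ℝ) 1, ENNReal.ofReal |f' r| * 1 := by
        refine setLIntegral_congr_fun measurableSet_Ioo fun r hr => ?_
        have := hs r hr
        have := hr.1
        simp only [f', abs_neg, mul_one]
        rw [abs_of_nonneg (by positivity)]
    _ = volume (f '' Ioo 0 1) := by rw [← h, setLIntegral_one]
    _ ≤ volume (Ioo 0 (π / t)) := measure_mono himg
    _ = ENNReal.ofReal (π / t) := by simp

lemma poisson_weight_le {s t u : ℝ} (hs : 0 < s) (ht : 0 < t) (h1 : t / 2 ≤ u) (h2 : u ≤ 2 * t) :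
    (1 + u ^ 2 / (2 * s)) * Real.exp (-(u ^ 2 / (4 * s))) ≤ 1024 * (s / (s + t ^ 2)) := by
  set v := t ^ 2 / s with hv
  have hv0 : 0 < v := by positivity
  have hu0 : 0 ≤ u := by linarith
  have e1 : s / (s + t ^ 2) = 1 / (1 + v) := by
    rw [hv]
    field_simp
  have e2 : u ^ 2 / (2 * s) ≤ 2 * v := by
    rw [hv, ← mul_div_assoc, div_le_div_iff₀ (by positivity) hs]
    have : u ^ 2 ≤ (2 * t) ^ 2 := by gcongr
    nlinarith
  have e3 : v / 16 ≤ u ^ 2 / (4 * s) := by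
    rw [hv, div_div, div_le_div_iff₀ (by positivity) (by positivity)]
    have : (t / 2) ^ 2 ≤ u ^ 2 := by gcongr
    nlinarith
  have e4 := Real.quadratic_le_exp_of_nonneg (by positivity : 0 ≤ v / 16)
  have e5 : Real.exp (-(u ^ 2 / (4 * s))) ≤ 1 / Real.exp (v / 16) := by
    rw [one_div, ← Real.exp_neg]
    gcongr
  calc
    _ ≤ (1 + 2 * v) * (1 / Real.exp (v / 16)) := by gcongr
    _ ≤ 1024 * (1 / (1 + v)) := by
      rw [mul_one_div, mul_one_div, div_le_div_iff₀ (Real.exp_pos _) (by positivity)]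
      nlinarith
    _ = _ := by rw [e1]

/-- The `t`-derivative of a subordinated integral is dominated by an integral against the weight
`s^{-1/2} (s + t²)⁻¹ ds` with `s = -log r`. -/
lemma ofReal_abs_deriv_subordinated_le {H : ℝ → ℝ} {d : ℕ} {t : ℝ} (ht : 0 < t)
    (hH : Measurable H) (hH0 : ∀ r ∈ Ioo (0 : ℝ) 1, 0 ≤ H r)
    (hfin : ∫⁻ r in Ioo (0 : ℝ) 1,
      ENNReal.ofReal (1 / (Real.sqrt (-Real.log r) * (-Real.log r + t ^ 2) * r)) *
        ENNReal.ofReal (H r / (1 - r) ^ d) < ∞) :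
    ENNReal.ofReal |deriv (fun u => (1 / (2 * Real.sqrt π)) * ∫ r in Ioo (0 : ℝ) 1,
      (u * Real.exp (u ^ 2 / (4 * Real.log r)) /
        ((1 - r) ^ d * (-Real.log r) ^ ((3 : ℝ) / 2))) * H r / r) t| ≤
    1024 * ∫⁻ r in Ioo (0 : ℝ) 1,
      ENNReal.ofReal (1 / (Real.sqrt (-Real.log r) * (-Real.log r + t ^ 2) * r)) *
        ENNReal.ofReal (H r / (1 - r) ^ d) := by
  set F : ℝ → ℝ → ℝ := fun u r => (u * Real.exp (u ^ 2 / (4 * Real.log r)) /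
        ((1 - r) ^ d * (-Real.log r) ^ ((3 : ℝ) / 2))) * H r / r with hF
  set w : ℝ → ℝ := fun r => H r / ((1 - r) ^ d * (-Real.log r) ^ ((3 : ℝ) / 2)) / r with hw
  set F' : ℝ → ℝ → ℝ := fun u r =>
    (1 + u ^ 2 / (2 * Real.log r)) * Real.exp (u ^ 2 / (4 * Real.log r)) * w r with hF'
  set bound : ℝ → ℝ := fun r =>
    1024 * (1 / (Real.sqrt (-Real.log r) * (-Real.log r + t ^ 2) * r) * (H r / (1 - r) ^ d))
    with hbound
  have hs : ∀ r ∈ Ioo (0 : ℝ) 1, 0 < -Real.log r := fun r hr => by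
    linarith [Real.log_neg hr.1 hr.2]
  have hw0 : ∀ r ∈ Ioo (0 : ℝ) 1, 0 ≤ w r := fun r hr => by
    have := hs r hr
    have := hr.1
    have := hH0 r hr
    have : 0 < 1 - r := by linarith [hr.2]
    simp only [hw]
    positivity
  have hbw : ∀ r ∈ Ioo (0 : ℝ) 1,
      bound r = 1024 * (-Real.log r / (-Real.log r + t ^ 2)) * w r := fun r hr => by
    have h0 := hs r hr
    have := hr.1
    have : 0 < 1 - r := by linarith [hr.2]
    have e : (-Real.log r) ^ ((3 : ℝ) / 2) = -Real.log r * Real.sqrt (-Real.log r) := by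
      rw [Real.sqrt_eq_rpow, ← Real.rpow_one_add' h0.le (by norm_num)]
      norm_num
    have := Real.sqrt_pos.2 h0
    simp only [hbound, hw, e]
    generalize -Real.log r = s at *
    field_simp
  have hb0 : ∀ r ∈ Ioo (0 : ℝ) 1, 0 ≤ bound r := fun r hr => by
    have := hs r hr
    have := hw0 r hr
    rw [hbw r hr]
    positivity
  have hexp : ∀ u r, Real.exp (u ^ 2 / (4 * Real.log r)) =
      Real.exp (-(u ^ 2 / (4 * -Real.log r))) := fun u r => by
    congr 1
    rw [mul_neg, div_neg, neg_neg]
  have hF'_le : ∀ r ∈ Ioo (0 : ℝ) 1, ∀ u ∈ Metric.ball t (t / 2), ‖F' u r‖ ≤ bound r :=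
    fun r hr u hu => by
    rw [Metric.mem_ball, Real.dist_eq, abs_lt] at hu
    have h0 := hs r hr
    have hp := poisson_weight_le h0 ht (by linarith : t / 2 ≤ u) (by linarith)
    have hq : |1 + u ^ 2 / (2 * Real.log r)| ≤ 1 + u ^ 2 / (2 * -Real.log r) := by
      have : u ^ 2 / (2 * Real.log r) = -(u ^ 2 / (2 * -Real.log r)) := by
        rw [mul_neg, div_neg, neg_neg]
      have : 0 ≤ u ^ 2 / (2 * -Real.log r) := by positivity
      rw [abs_le]
      constructor <;> linarith
    rw [hbw r hr, Real.norm_eq_abs, hF']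
    simp only [abs_mul, Real.abs_exp, abs_of_nonneg (hw0 r hr)]
    refine mul_le_mul_of_nonneg_right (le_trans ?_ hp) (hw0 r hr)
    rw [hexp]
    gcongr
  have hbm : Measurable bound := by
    simp only [hbound]
    fun_prop
  have hbl : ∫⁻ r in Ioo (0 : ℝ) 1, ENNReal.ofReal (bound r) =
      1024 * ∫⁻ r in Ioo (0 : ℝ) 1,
      ENNReal.ofReal (1 / (Real.sqrt (-Real.log r) * (-Real.log r + t ^ 2) * r)) *
        ENNReal.ofReal (H r / (1 - r) ^ d) := by
    rw [← lintegral_const_mul _ (by fun_prop)]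
    refine setLIntegral_congr_fun measurableSet_Ioo fun r hr => ?_
    have := hs r hr
    have := hr.1
    simp only [hbound]
    rw [ENNReal.ofReal_mul (by norm_num), ENNReal.ofReal_mul (by positivity)]
    norm_num
  have hb0' : 0 ≤ᵐ[volume.restrict (Ioo (0 : ℝ) 1)] bound := by
    filter_upwards [ae_restrict_mem measurableSet_Ioo] with r hr using hb0 r hr
  have hbi : Integrable bound (volume.restrict (Ioo (0 : ℝ) 1)) := by
    refine (lintegral_ofReal_ne_top_iff_integrable hbm.aestronglyMeasurable hb0').1 ?_
    rw [hbl]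
    exact ENNReal.mul_ne_top (by norm_num) hfin.ne
  have hFm : ∀ u, Measurable (F u) := fun u => by
    simp only [hF]
    fun_prop
  have hFi : Integrable (F t) (volume.restrict (Ioo (0 : ℝ) 1)) := by
    refine (hbi.const_mul t).mono' (hFm t).aestronglyMeasurable ?_
    filter_upwards [ae_restrict_mem measurableSet_Ioo] with r hr
    have h0 := hs r hr
    have hp := poisson_weight_le h0 ht (by linarith : t / 2 ≤ t) (by linarith)
    have e : F t r = t * (Real.exp (-(t ^ 2 / (4 * -Real.log r))) * w r) := by
      simp only [hF, hw, hexp]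
      ring
    have := hw0 r hr
    rw [e, Real.norm_of_nonneg (by positivity), hbw r hr]
    refine mul_le_mul_of_nonneg_left (mul_le_mul_of_nonneg_right (le_trans ?_ hp) this) ht.le
    refine le_mul_of_one_le_left (Real.exp_pos _).le ?_
    have : 0 ≤ t ^ 2 / (2 * -Real.log r) := by positivity
    linarith
  have hF'm : Measurable (F' t) := by
    simp only [hF', hw]
    fun_prop
  have hder := (hasDerivAt_integral_of_dominated_loc_of_deriv_le
    (Metric.ball_mem_nhds t (half_pos ht))
    (Filter.Eventually.of_forall fun u => (hFm u).aestronglyMeasurable) hFi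
    hF'm.aestronglyMeasurable
    ((ae_restrict_mem measurableSet_Ioo).mono hF'_le) hbi
    (by
      filter_upwards [ae_restrict_mem measurableSet_Ioo] with r hr u _
      have h := ((hasDerivAt_id u).mul
        ((((hasDerivAt_id u).pow 2).div_const (4 * Real.log r)).exp)).mul_const (w r)
      have hl : Real.log r ≠ 0 := by linarith [hs r hr, neg_ne_zero.1 (hs r hr).ne']
      refine (h.congr_of_eventuallyEq (Filter.Eventually.of_forall fun v => ?_)).congr_deriv ?_
      · simp only [hF, hw, id, Pi.mul_apply, Pi.pow_apply]
        ring
      · simp only [hF', id, Pi.pow_apply]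
        field_simp
        ring)).2
  rw [(hder.const_mul (1 / (2 * Real.sqrt π))).deriv, ← hbl,
    ← ofReal_integral_eq_lintegral_ofReal hbi hb0']
  refine ENNReal.ofReal_le_ofReal ?_
  have hle : ‖∫ r in Ioo (0 : ℝ) 1, F' t r‖ ≤ ∫ r in Ioo (0 : ℝ) 1, bound r :=
    norm_integral_le_of_norm_le hbi ((ae_restrict_mem measurableSet_Ioo).mono fun r hr =>
      hF'_le r hr t (Metric.mem_ball_self (half_pos ht)))
  have hpi : 1 / (2 * Real.sqrt π) ≤ 1 := by
    rw [div_le_one (by positivity)]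
    have : 1 ≤ Real.sqrt π := Real.one_le_sqrt.2 (by linarith [Real.pi_gt_three])
    linarith
  rw [abs_mul, abs_of_nonneg (by positivity : 0 ≤ 1 / (2 * Real.sqrt π))]
  exact (mul_le_of_le_one_left (abs_nonneg _) hpi).trans hle

lemma laguerreFactor_nonneg {a x r y : ℝ} (ha : -1 < a) (hx : 0 < x) (hr : r ∈ Ioo (0 : ℝ) 1)
    (hy : 0 < y) : 0 ≤ laguerreFactor a x r y := by
  have h1 : 0 < 1 - r := by linarith [hr.2]
  have := besselI_nonneg ha (by positivity : 0 ≤ 2 * Real.sqrt (r * x * y) / (1 - r))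
  unfold laguerreFactor
  positivity

lemma Measurable.laguerreFactor {Z : Type*} [MeasurableSpace Z] (a x : ℝ) {f g : Z → ℝ}
    (hf : Measurable f) (hg : Measurable g) :
    Measurable fun z => laguerreFactor a x (f z) (g z) := by
  unfold _root_.laguerreFactor
  fun_prop

lemma Measurable.prod_laguerreFactor {Z : Type*} [MeasurableSpace Z] {d : ℕ} (α x : Fin d → ℝ)
    {f : Z → ℝ} {g : Z → Fin d → ℝ} (hf : Measurable f) (hg : Measurable g) :
    Measurable fun z => ∏ j, _root_.laguerreFactor (α j) (x j) (f z) (g z j) :=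
  Finset.measurable_prod _ fun j _ => hf.laguerreFactor (α j) (x j) (measurable_pi_iff.1 hg j)

/-- The Laguerre heat kernel is sub-Markovian. -/
lemma lintegral_prod_laguerreFactor_le {d : ℕ} {α x : Fin d → ℝ} (hα : ∀ j, -1 < α j)
    (hx : ∀ j, 0 < x j) {r : ℝ} (hr : r ∈ Ioo (0 : ℝ) 1) :
    ∫⁻ y in posOrthant d,
      ENNReal.ofReal ((∏ j, laguerreFactor (α j) (x j) r (y j)) / (1 - r) ^ d) ≤ 1 := by
  have h1 : 0 < 1 - r := by linarith [hr.2]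
  have hm : MeasurableSet (posOrthant d) := MeasurableSet.univ_pi fun _ => measurableSet_Ioi
  have hmeas : ∀ j, Measurable fun y => ENNReal.ofReal (laguerreFactor (α j) (x j) r y) :=
    fun j =>
      (measurable_const.laguerreFactor (α j) (x j) measurable_id).ennreal_ofReal
  calc
    _ = ∫⁻ y in posOrthant d, (∏ j, ENNReal.ofReal (laguerreFactor (α j) (x j) r (y j))) *
          ENNReal.ofReal (((1 - r) ^ d)⁻¹) := by
        refine setLIntegral_congr_fun hm fun y hy => ?_
        have hnn : ∀ j, 0 ≤ laguerreFactor (α j) (x j) r (y j) := fun j =>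
          laguerreFactor_nonneg (hα j) (hx j) hr (hy j (mem_univ j))
        simp only [div_eq_mul_inv]
        rw [ENNReal.ofReal_mul (Finset.prod_nonneg fun j _ => hnn j),
          ENNReal.ofReal_prod_of_nonneg fun j _ => hnn j]
    _ = (∏ j, ∫⁻ y in Ioi (0 : ℝ), ENNReal.ofReal (laguerreFactor (α j) (x j) r y)) *
          ENNReal.ofReal (((1 - r) ^ d)⁻¹) := by
        have hprod : Measurable fun y : Fin d → ℝ =>
            ∏ j, ENNReal.ofReal (laguerreFactor (α j) (x j) r (y j)) :=
          Finset.measurable_prod _ fun j _ => (hmeas j).comp (measurable_pi_apply j)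
        rw [lintegral_mul_const _ hprod, posOrthant, volume_pi,
          Measure.restrict_pi_pi, lintegral_pi_prod _ hmeas]
    _ ≤ (∏ _j : Fin d, ENNReal.ofReal (1 - r)) * ENNReal.ofReal (((1 - r) ^ d)⁻¹) := by
        gcongr with j
        exact lintegral_laguerreFactor_le (hα j) (hx j) hr
    _ = 1 := by
        rw [Finset.prod_const, Finset.card_univ, Fintype.card_fin, ← ENNReal.ofReal_pow h1.le,
          ← ENNReal.ofReal_mul (by positivity), mul_inv_cancel₀ (by positivity),
          ENNReal.ofReal_one]

/-- The `t`-derivative of the Poisson–Laguerre kernel has `L¹` norm `O(1/t)` on the whole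
orthant. -/
lemma lintegral_abs_deriv_plKernel_le {d : ℕ} {α x : Fin d → ℝ} (hα : ∀ j, -1 < α j)
    (hx : ∀ j, 0 < x j) {t : ℝ} (ht : 0 < t) :
    ∫⁻ y in posOrthant d, ENNReal.ofReal |deriv (fun u => plKernel d α u x y) t| ≤
      ENNReal.ofReal (1024 * π / t) := by
  have hm : MeasurableSet (posOrthant d) := MeasurableSet.univ_pi fun _ => measurableSet_Ioi
  set N : ℝ → ℝ≥0∞ := fun r =>
    ENNReal.ofReal (1 / (Real.sqrt (-Real.log r) * (-Real.log r + t ^ 2) * r)) with hN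
  set W : (Fin d → ℝ) → ℝ → ℝ≥0∞ := fun y r =>
    ENNReal.ofReal ((∏ j, laguerreFactor (α j) (x j) r (y j)) / (1 - r) ^ d) with hW
  have hNm : Measurable N := by
    simp only [hN]
    fun_prop
  have hWm : Measurable fun p : (Fin d → ℝ) × ℝ => W p.1 p.2 := by
    have := measurable_snd.prod_laguerreFactor α x (measurable_fst (α := Fin d → ℝ) (β := ℝ))
    simp only [hW]
    fun_prop
  have hNW : Measurable fun p : (Fin d → ℝ) × ℝ => N p.2 * W p.1 p.2 :=
    (hNm.comp measurable_snd).mul hWm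
  have htot : ∫⁻ y in posOrthant d, ∫⁻ r in Ioo (0 : ℝ) 1, N r * W y r ≤
      ENNReal.ofReal (π / t) := by
    rw [lintegral_lintegral_swap hNW.aemeasurable]
    refine le_trans (setLIntegral_mono' measurableSet_Ioo fun r hr => ?_)
      (lintegral_Ioo_inv_sqrt_neg_log_le ht)
    have hWr : Measurable fun y => W y r :=
      ((measurable_const.prod_laguerreFactor α x measurable_id).div_const _).ennreal_ofReal
    rw [lintegral_const_mul _ hWr]
    calc N r * ∫⁻ y in posOrthant d, W y r ≤ N r * 1 := by
          gcongr
          exact lintegral_prod_laguerreFactor_le hα hx hr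
      _ = _ := mul_one _
  have hae : ∀ᵐ y ∂(volume.restrict (posOrthant d)), ∫⁻ r in Ioo (0 : ℝ) 1, N r * W y r < ∞ :=
    ae_lt_top hNW.lintegral_prod_right' (htot.trans_lt ENNReal.ofReal_lt_top).ne
  calc
    _ ≤ ∫⁻ y in posOrthant d, 1024 * ∫⁻ r in Ioo (0 : ℝ) 1, N r * W y r := by
        refine lintegral_mono_ae ?_
        filter_upwards [hae, ae_restrict_mem hm] with y hy hy0
        refine ofReal_abs_deriv_subordinated_le ht
          (H := fun r => ∏ j, laguerreFactor (α j) (x j) r (y j))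
          (measurable_id.prod_laguerreFactor α x measurable_const)
          (fun r hr => Finset.prod_nonneg fun j _ =>
            laguerreFactor_nonneg (hα j) (hx j) hr (hy0 j (mem_univ j))) hy
    _ = 1024 * ∫⁻ y in posOrthant d, ∫⁻ r in Ioo (0 : ℝ) 1, N r * W y r :=
        lintegral_const_mul _ hNW.lintegral_prod_right'
    _ ≤ 1024 * ENNReal.ofReal (π / t) := by gcongr
    _ = ENNReal.ofReal (1024 * π / t) := by
        rw [mul_div_assoc, ENNReal.ofReal_mul (by norm_num)]
        norm_num

theorem laguerre_poisson_kernel_deriv_L1_mixed_region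
    (d : ℕ) (hd : 1 ≤ d) (k : ℕ) (hk : k ≤ d) (α : Fin d → ℝ)
    (hα₁ : ∀ j : Fin d, (j : ℕ) < k → -1 < α j)
    (hα₂ : ∀ j : Fin d, k ≤ (j : ℕ) → -(1 / 2 : ℝ) < α j) :
    ∃ C > 0, ∀ t > (0 : ℝ), ∀ x ∈ posOrthant d,
      (∫ y in {y : Fin d → ℝ | (∀ j, 0 < y j) ∧
          (∀ j : Fin d, (j : ℕ) < k →
            Real.sqrt (Real.exp (-t) * x j * y j) ≤ 1 - Real.exp (-t)) ∧
          (∀ j : Fin d, k ≤ (j : ℕ) →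
            1 - Real.exp (-t) < Real.sqrt (Real.exp (-t) * x j * y j))},
        |deriv (fun u => plKernel d α u x y) t|) ≤ C / t := by
  have hα : ∀ j, -1 < α j := fun j => by
    rcases lt_or_ge (j : ℕ) k with h | h
    · exact hα₁ j h
    · linarith [hα₂ j h]
  refine ⟨1024 * π, by positivity, fun t ht x hx => ?_⟩
  have hb := lintegral_abs_deriv_plKernel_le hα (fun j => hx j (mem_univ j)) ht
  refine (Real.le_norm_self _).trans ((norm_integral_le_lintegral_norm _).trans
    (ENNReal.toReal_le_of_le_ofReal (by positivity) (le_trans ?_ hb)))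
  simp only [Real.norm_eq_abs, abs_abs]
  exact lintegral_mono_set fun y hy j _ => hy.1 j
end
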